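/- Let F_n be the set of Boolean functions from {-1,1}^n to {-1,1} and let π_n be a probability measure on F_n. Let ε_n ≤ 1/2 be non-increasing with ε_n → 0. Then {π_n} is annealed quantitatively noise sensitive (QNS) at level {ε_n} if and only if {π_n} is quenched QNS at level {ε_n} and Var_{f_n}(E_ω[f_n(ω)]) → 0 as n → ∞. -/

import Mathlib

open Finset Filter

noncomputable section

/-- The ±1 real value of a Boolean bit. -/
def chi (b : Bool) : ℝ := if b then 1 else -1

/-- The joint probability of the pair `(ω, ω^ε)`, where `ω` is uniform on `{-1,1}^n` and
`ω^ε` flips each bit of `ω` independently with probability `ε`. -/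
def pairWeight (n : ℕ) (ε : ℝ) (ω η : Fin n → Bool) : ℝ :=
  (1 / 2) ^ n * ∏ i, (if ω i = η i then 1 - ε else ε)

/-- Expectation of `g ω` for `ω` uniform on `{-1,1}^n`. -/
def unifMean (n : ℕ) (g : (Fin n → Bool) → ℝ) : ℝ := (∑ ω, g ω) / 2 ^ n

/-- Expectation of `F ω ω^ε` over the correlated pair `(ω, ω^ε)`. -/
def pairMean (n : ℕ) (ε : ℝ) (F : (Fin n → Bool) → (Fin n → Bool) → ℝ) : ℝ :=
  ∑ ω, ∑ η, pairWeight n ε ω η * F ω η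

/-- `Cov_{ω,ω^ε}(g(ω), g(ω^ε))` for a fixed (real-valued) function `g` on the cube. -/
def noiseCov (n : ℕ) (ε : ℝ) (g : (Fin n → Bool) → ℝ) : ℝ :=
  pairMean n ε (fun ω η => g ω * g η) - unifMean n g ^ 2

/-!
By the law of total covariance, the annealed covariance is
`E_f[Cov(f(ω), f(ω^ε))] + Var_f(E_ω[f(ω)])`. Both summands are nonnegative, so the sum tends to
zero iff both do. For the first, the quenched covariances lie in `[0, 1]`, and for uniformly
bounded nonnegative variables convergence of the means to zero is convergence to zero in
probability. Nonnegativity comes from the semigroup property of the noise operator: splitting the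
noise into two independent steps of level `δ` gives `E[f(ω) f(ω^ε)] = E[(T_δ f)²] ≥ (E f)²`.
-/

section NoiseKernel

variable {ι : Type*} [Fintype ι]

/-- The probability that flipping each bit of `ω` independently with probability `ε` gives `η`:
the factor of `pairWeight` that remains after conditioning on `ω`. -/
def noiseKernel (ε : ℝ) (ω η : ι → Bool) : ℝ := ∏ i, (if ω i = η i then 1 - ε else ε)

theorem noiseKernel_comm (ε : ℝ) (ω η : ι → Bool) : noiseKernel ε ω η = noiseKernel ε η ω := by
  simp only [noiseKernel, eq_comm]

theorem noiseKernel_nonneg {ε : ℝ} (hε : ε ∈ Set.Icc 0 1) (ω η : ι → Bool) :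
    0 ≤ noiseKernel ε ω η :=
  prod_nonneg fun _ _ => ite_nonneg (sub_nonneg.2 hε.2) hε.1

variable [DecidableEq ι]

/-- The noise operator `T_ε`, with `T_ε g (ω) = E[g(ω^ε) | ω]`. It is parametrized by the flip
probability `ε`, not by the correlation `1 - 2ε`. -/
def noiseOp (ε : ℝ) (g : (ι → Bool) → ℝ) (ω : ι → Bool) : ℝ := ∑ η, noiseKernel ε ω η * g η

theorem sum_noiseKernel (ε : ℝ) (ω : ι → Bool) : ∑ η, noiseKernel ε ω η = 1 := by
  calc ∑ η, noiseKernel ε ω η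
      = ∏ i, ∑ b, (if ω i = b then 1 - ε else ε) := by
        rw [Fintype.prod_sum]
        rfl
    _ = 1 := prod_eq_one fun i _ => by cases ω i <;> simp

theorem sum_noiseKernel_mul_noiseKernel (a b : ℝ) (ω η : ι → Bool) :
    ∑ ζ, noiseKernel a ω ζ * noiseKernel b ζ η = noiseKernel (a * (1 - b) + (1 - a) * b) ω η := by
  calc ∑ ζ, noiseKernel a ω ζ * noiseKernel b ζ η
      = ∏ i, ∑ c, (if ω i = c then 1 - a else a) * (if c = η i then 1 - b else b) := by
        simp only [Fintype.prod_sum, noiseKernel, prod_mul_distrib]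
    _ = noiseKernel (a * (1 - b) + (1 - a) * b) ω η :=
        prod_congr rfl fun i _ => by cases ω i <;> cases η i <;> simp <;> ring

theorem noiseOp_const (ε c : ℝ) : noiseOp ε (fun _ : ι → Bool => c) = fun _ => c := by
  funext ω
  rw [noiseOp, ← sum_mul, sum_noiseKernel, one_mul]

theorem noiseOp_noiseOp (a b : ℝ) (g : (ι → Bool) → ℝ) :
    noiseOp a (noiseOp b g) = noiseOp (a * (1 - b) + (1 - a) * b) g := by
  funext ω
  simp only [noiseOp, ← sum_noiseKernel_mul_noiseKernel, mul_sum, sum_mul, mul_assoc]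
  exact sum_comm

theorem sum_mul_noiseOp (ε : ℝ) (f g : (ι → Bool) → ℝ) :
    ∑ ω, f ω * noiseOp ε g ω = ∑ ω, noiseOp ε f ω * g ω := by
  simp only [noiseOp, mul_sum, sum_mul]
  rw [sum_comm]
  refine sum_congr rfl fun η _ => sum_congr rfl fun ω _ => ?_
  rw [noiseKernel_comm]
  ring

end NoiseKernel

section NoiseCovariance

variable {n : ℕ}

theorem unifMean_sq_le (g : (Fin n → Bool) → ℝ) :
    unifMean n g ^ 2 ≤ unifMean n (fun ω => g ω ^ 2) := by
  simpa [unifMean] using sum_div_card_sq_le_sum_sq_div_card (s := univ) (f := g)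

theorem unifMean_noiseOp (ε : ℝ) (g : (Fin n → Bool) → ℝ) :
    unifMean n (noiseOp ε g) = unifMean n g := by
  simpa [unifMean, noiseOp_const] using
    congrArg (· / (2 : ℝ) ^ n) (sum_mul_noiseOp ε (fun _ => 1) g)

theorem pairWeight_eq_mul_noiseKernel (ε : ℝ) (ω η : Fin n → Bool) :
    pairWeight n ε ω η = (1 / 2) ^ n * noiseKernel ε ω η := rfl

theorem pairMean_mul (ε : ℝ) (f g : (Fin n → Bool) → ℝ) :
    pairMean n ε (fun ω η => f ω * g η) = unifMean n (fun ω => f ω * noiseOp ε g ω) := by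
  simp only [pairMean, pairWeight_eq_mul_noiseKernel, unifMean, noiseOp, mul_sum, sum_div]
  refine sum_congr rfl fun ω _ => sum_congr rfl fun η _ => ?_
  rw [one_div, inv_pow]
  ring

theorem pairMean_mul_self_eq_unifMean_noiseOp_sq (δ : ℝ) (g : (Fin n → Bool) → ℝ) :
    pairMean n (δ * (1 - δ) + (1 - δ) * δ) (fun ω η => g ω * g η) =
      unifMean n (fun ω => noiseOp δ g ω ^ 2) := by
  rw [pairMean_mul, ← noiseOp_noiseOp]
  simp only [unifMean, sum_mul_noiseOp δ g, sq]

theorem noiseCov_nonneg {ε : ℝ} (hε : ε ≤ 1 / 2) (g : (Fin n → Bool) → ℝ) :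
    0 ≤ noiseCov n ε g := by
  -- Noise at level `ε` is two successive noises at level `δ`, where `1 - 2ε = (1 - 2δ)²`.
  obtain ⟨δ, rfl⟩ : ∃ δ : ℝ, ε = δ * (1 - δ) + (1 - δ) * δ := by
    refine ⟨(1 - √(1 - 2 * ε)) / 2, ?_⟩
    linear_combination Real.sq_sqrt (show 0 ≤ 1 - 2 * ε by linarith) / 2
  rw [noiseCov, sub_nonneg, pairMean_mul_self_eq_unifMean_noiseOp_sq, ← unifMean_noiseOp δ g]
  exact unifMean_sq_le _

theorem pairMean_le {ε C : ℝ} (hε : ε ∈ Set.Icc 0 1) {F : (Fin n → Bool) → (Fin n → Bool) → ℝ}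
    (hF : ∀ ω η, F ω η ≤ C) : pairMean n ε F ≤ C := by
  calc pairMean n ε F
      ≤ ∑ ω, ∑ η, pairWeight n ε ω η * C := by
        refine sum_le_sum fun ω _ => sum_le_sum fun η _ =>
          mul_le_mul_of_nonneg_left (hF ω η) ?_
        rw [pairWeight_eq_mul_noiseKernel]
        exact mul_nonneg (by positivity) (noiseKernel_nonneg hε ω η)
    _ = C := by
        simp only [pairWeight_eq_mul_noiseKernel, ← sum_mul, ← mul_sum, sum_noiseKernel]
        simp

theorem noiseCov_le_sq {ε C : ℝ} (hε : ε ∈ Set.Icc 0 1) {g : (Fin n → Bool) → ℝ}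
    (hg : ∀ ω, |g ω| ≤ C) : noiseCov n ε g ≤ C ^ 2 := by
  have hmul (ω η : Fin n → Bool) : g ω * g η ≤ C ^ 2 :=
    calc g ω * g η ≤ |g ω| * |g η| := (le_abs_self _).trans_eq (abs_mul _ _)
      _ ≤ C ^ 2 := by
        rw [sq]
        exact mul_le_mul (hg ω) (hg η) (abs_nonneg _) ((abs_nonneg _).trans (hg ω))
  exact (sub_le_self _ (sq_nonneg _)).trans (pairMean_le hε hmul)

end NoiseCovariance

section FiniteExpectation

variable {α : Type*} [Fintype α]

/-- The expectation of a real random variable `X` under the probability mass function `p` on a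
finite type, as an explicit finite sum. -/
def pmfMean (p : PMF α) (X : α → ℝ) : ℝ := ∑ a, (p a).toReal * X a

/-- The variance of `X` under `p`, in the form `E[X²] - E[X]²`. -/
def pmfVar (p : PMF α) (X : α → ℝ) : ℝ := pmfMean p (fun a => X a ^ 2) - pmfMean p X ^ 2

theorem sum_toReal_pmf (p : PMF α) : ∑ a, (p a).toReal = 1 := by
  rw [← ENNReal.toReal_sum fun a _ => p.apply_ne_top a, ← tsum_fintype (L := .unconditional _),
    p.tsum_coe, ENNReal.toReal_one]

theorem pmfMean_const (p : PMF α) (c : ℝ) : pmfMean p (fun _ => c) = c := by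
  rw [pmfMean, ← sum_mul, sum_toReal_pmf, one_mul]

theorem pmfMean_add (p : PMF α) (X Y : α → ℝ) :
    pmfMean p (fun a => X a + Y a) = pmfMean p X + pmfMean p Y := by
  simp only [pmfMean, mul_add, sum_add_distrib]

theorem pmfMean_sub (p : PMF α) (X Y : α → ℝ) :
    pmfMean p (fun a => X a - Y a) = pmfMean p X - pmfMean p Y := by
  simp only [pmfMean, mul_sub, sum_sub_distrib]

theorem pmfMean_const_mul (p : PMF α) (c : ℝ) (X : α → ℝ) :
    pmfMean p (fun a => c * X a) = c * pmfMean p X := by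
  simp only [pmfMean, mul_sum, mul_left_comm]

theorem pmfMean_mono (p : PMF α) {X Y : α → ℝ} (h : ∀ a, X a ≤ Y a) :
    pmfMean p X ≤ pmfMean p Y :=
  sum_le_sum fun a _ => mul_le_mul_of_nonneg_left (h a) ENNReal.toReal_nonneg

theorem pmfMean_nonneg (p : PMF α) {X : α → ℝ} (h : ∀ a, 0 ≤ X a) : 0 ≤ pmfMean p X :=
  sum_nonneg fun a _ => mul_nonneg ENNReal.toReal_nonneg (h a)

theorem pmfVar_nonneg (p : PMF α) (X : α → ℝ) : 0 ≤ pmfVar p X :=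
  sub_nonneg.2 <| Real.pow_arith_mean_le_arith_mean_pow_of_even univ _ X
    (fun _ _ => ENNReal.toReal_nonneg) (sum_toReal_pmf p) even_two

theorem mul_one_sub_pmfMean_ite_le (p : PMF α) {X : α → ℝ} (hX : ∀ a, 0 ≤ X a) (δ : ℝ) :
    δ * (1 - pmfMean p (fun a => if X a ≤ δ then 1 else 0)) ≤ pmfMean p X := by
  calc δ * (1 - pmfMean p (fun a => if X a ≤ δ then 1 else 0))
      = pmfMean p (fun a => δ * (1 - if X a ≤ δ then 1 else 0)) := by
        simp only [pmfMean_const_mul, pmfMean_sub, pmfMean_const]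
    _ ≤ pmfMean p X := pmfMean_mono p fun a => by
        have := hX a
        split_ifs <;> linarith

theorem pmfMean_le_add_mul_one_sub_pmfMean_ite (p : PMF α) {X : α → ℝ} {C δ : ℝ}
    (hX : ∀ a, X a ≤ C) (hδ : 0 ≤ δ) :
    pmfMean p X ≤ δ + C * (1 - pmfMean p (fun a => if X a ≤ δ then 1 else 0)) := by
  calc pmfMean p X
      ≤ pmfMean p (fun a => δ + C * (1 - if X a ≤ δ then 1 else 0)) := pmfMean_mono p fun a => by
        have := hX a
        split_ifs <;> linarith
    _ = δ + C * (1 - pmfMean p (fun a => if X a ≤ δ then 1 else 0)) := by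
        simp only [pmfMean_add, pmfMean_const_mul, pmfMean_sub, pmfMean_const]

end FiniteExpectation

section Limits

variable {ι : Type*} {l : Filter ι}

theorem tendsto_add_zero_iff_of_nonneg {u v : ι → ℝ} (hu : ∀ i, 0 ≤ u i) (hv : ∀ i, 0 ≤ v i) :
    Tendsto (fun i => u i + v i) l (nhds 0) ↔ Tendsto u l (nhds 0) ∧ Tendsto v l (nhds 0) :=
  ⟨fun h => ⟨squeeze_zero hu (fun i => le_add_of_nonneg_right (hv i)) h,
    squeeze_zero hv (fun i => le_add_of_nonneg_left (hu i)) h⟩,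
    fun h => by simpa only [add_zero] using h.1.add h.2⟩

variable {α : ι → Type*} [∀ i, Fintype (α i)] {p : ∀ i, PMF (α i)}

theorem tendsto_pmfMean_zero_iff {X : ∀ i, α i → ℝ} {C : ℝ} (hX : ∀ i a, X i a ∈ Set.Icc 0 C) :
    Tendsto (fun i => pmfMean (p i) (X i)) l (nhds 0) ↔
      ∀ δ : ℝ, 0 < δ →
        ∀ᶠ i in l, 1 - δ ≤ pmfMean (p i) (fun a => if X i a ≤ δ then 1 else 0) := by
  have mean_nonneg (i : ι) : 0 ≤ pmfMean (p i) (X i) := pmfMean_nonneg _ fun a => (hX i a).1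
  constructor
  · intro h δ hδ
    filter_upwards [h.eventually_lt_const (mul_pos hδ hδ)] with i hi
    have markov := mul_one_sub_pmfMean_ite_le (p i) (fun a => (hX i a).1) δ
    linarith [lt_of_mul_lt_mul_left (markov.trans_lt hi) hδ.le]
  · intro h
    refine tendsto_order.2 ⟨fun r hr => .of_forall fun i => hr.trans_le (mean_nonneg i),
      fun r hr => ?_⟩
    have hC : 0 < |C| + 2 := by positivity
    have hδ : 0 < r / (|C| + 2) := div_pos hr hC
    filter_upwards [h _ hδ] with i hi
    have upper := pmfMean_le_add_mul_one_sub_pmfMean_ite (p i)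
      (fun a => (hX i a).2.trans (le_abs_self C)) hδ.le
    calc pmfMean (p i) (X i) ≤ r / (|C| + 2) + |C| * (r / (|C| + 2)) :=
          upper.trans <| by gcongr; linarith
      _ < r / (|C| + 2) * (|C| + 2) := by linarith
      _ = r := div_mul_cancel₀ r hC.ne'

end Limits

section Annealed

variable {α : Type*} [Fintype α] {n : ℕ}

/-- The covariance of `g(ω)` and `g(ω^ε)` when `g` itself is random, `g = g a` with `a` drawn
from `p`. Since `ω^ε` is again uniform, both variables have the mean that is squared here. -/
def annealedCov (p : PMF α) (ε : ℝ) (g : α → (Fin n → Bool) → ℝ) : ℝ :=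
  pmfMean p (fun a => pairMean n ε (fun ω η => g a ω * g a η)) -
    pmfMean p (fun a => unifMean n (g a)) ^ 2

theorem annealedCov_eq_pmfMean_noiseCov_add_pmfVar (p : PMF α) (ε : ℝ)
    (g : α → (Fin n → Bool) → ℝ) :
    annealedCov p ε g =
      pmfMean p (fun a => noiseCov n ε (g a)) + pmfVar p (fun a => unifMean n (g a)) := by
  simp only [annealedCov, noiseCov, pmfMean_sub, pmfVar]
  ring

end Annealed

theorem annealed_QNS_iff_quenched_QNS_and_var_tendsto_zero_general
    {ι : Type*} {l : Filter ι} {α : ι → Type*} [∀ i, Fintype (α i)] (p : ∀ i, PMF (α i))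
    {n : ι → ℕ} (g : ∀ i, α i → (Fin (n i) → Bool) → ℝ) {C : ℝ} (hg : ∀ i a ω, |g i a ω| ≤ C)
    {ε : ι → ℝ} (hε : ∀ i, ε i ∈ Set.Icc 0 (1 / 2)) :
    Tendsto (fun i => annealedCov (p i) (ε i) (g i)) l (nhds 0) ↔
      (∀ δ : ℝ, 0 < δ → ∀ᶠ i in l,
        1 - δ ≤ pmfMean (p i) (fun a => if noiseCov (n i) (ε i) (g i a) ≤ δ then 1 else 0)) ∧
      Tendsto (fun i => pmfVar (p i) (fun a => unifMean (n i) (g i a))) l (nhds 0) := by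
  have cov_mem (i : ι) (a : α i) : noiseCov (n i) (ε i) (g i a) ∈ Set.Icc 0 (C ^ 2) :=
    ⟨noiseCov_nonneg (hε i).2 _,
      noiseCov_le_sq ⟨(hε i).1, (hε i).2.trans (by norm_num)⟩ (hg i a)⟩
  simp only [annealedCov_eq_pmfMean_noiseCov_add_pmfVar]
  rw [tendsto_add_zero_iff_of_nonneg (fun i => pmfMean_nonneg _ fun a => (cov_mem i a).1)
    (fun i => pmfVar_nonneg _ _), tendsto_pmfMean_zero_iff cov_mem]

theorem abs_chi (b : Bool) : |chi b| = 1 := by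
  cases b <;> simp [chi]

/-- for probability measures `pm n` on Boolean functions and levels `ε n ≤ 1/2`
non-increasing with `ε n → 0`, annealed QNS at level `{ε_n}` holds iff quenched QNS at level
`{ε_n}` holds and `Var_{f}(E_ω[f(ω)]) → 0`. -/
theorem annealed_QNS_iff_quenched_QNS_and_var_tendsto_zero
    (pm : (n : ℕ) → PMF ((Fin n → Bool) → Bool))
    (ε : ℕ → ℝ) (hε_pos : ∀ n, 0 < ε n) (hε_half : ∀ n, ε n ≤ 1 / 2)
    (hε_anti : Antitone ε) (hε_lim : Tendsto ε atTop (nhds 0)) :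
    -- annealed QNS at level {ε_n}
    Tendsto (fun n =>
        (∑ f : (Fin n → Bool) → Bool, (pm n f).toReal *
            pairMean n (ε n) (fun ω η => chi (f ω) * chi (f η)))
          - (∑ f : (Fin n → Bool) → Bool,
              (pm n f).toReal * unifMean n (fun ω => chi (f ω))) ^ 2)
      atTop (nhds 0)
    ↔
    -- quenched QNS at level {ε_n}
    ((∀ δ : ℝ, 0 < δ → ∃ N : ℕ, ∀ n ≥ N,
        (1 : ℝ) - δ ≤ ∑ f : (Fin n → Bool) → Bool, (pm n f).toReal *
          (if noiseCov n (ε n) (fun ω => chi (f ω)) ≤ δ then 1 else 0))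
      ∧
      -- Var_{f}(E_ω[f(ω)]) → 0
      Tendsto (fun n =>
          (∑ f : (Fin n → Bool) → Bool,
              (pm n f).toReal * unifMean n (fun ω => chi (f ω)) ^ 2)
            - (∑ f : (Fin n → Bool) → Bool,
                (pm n f).toReal * unifMean n (fun ω => chi (f ω))) ^ 2)
        atTop (nhds 0)) := by
  simpa only [annealedCov, pmfVar, pmfMean, eventually_atTop] using
    annealed_QNS_iff_quenched_QNS_and_var_tendsto_zero_general (l := atTop) pm
      (fun _ f ω => chi (f ω)) (fun _ f ω => (abs_chi (f ω)).le)
      (fun n => ⟨(hε_pos n).le, hε_half n⟩)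

end
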